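/- There exists a constant c > 0 such that the inequality {x_{k,0}·ξ⁶} ≤ c/k holds for infinitely many integers k ≥ 1, i.e. the set {k ≥ 1 : {x_{k,0}·ξ⁶} ≤ c/k} is infinite. -/

import Mathlib

open Polynomial Filter

noncomputable def gold : ℝ := (1 + Real.sqrt 5) / 2

def Mmat (k : ℕ) : Matrix (Fin 2) (Fin 2) ℤ := !![3, (-1)^k; (-1)^(k+1), 0]

noncomputable def Xnorm (x : ℕ → Matrix (Fin 2) (Fin 2) ℤ) (k : ℕ) : ℝ :=
  max |(x k 0 0 : ℝ)| (max |(x k 0 1 : ℝ)| |(x k 1 1 : ℝ)|)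

def MarkoffSeq (ξ : ℝ) (x : ℕ → Matrix (Fin 2) (Fin 2) ℤ) : Prop :=
  (∀ k, 1 ≤ k → x k 0 1 = x k 1 0) ∧
  (∀ k, 1 ≤ k → (x k).det = 1) ∧
  ∃ c₁ c₂ c₃ : ℝ, 0 < c₁ ∧ 0 < c₂ ∧ 0 < c₃ ∧ ∀ k, 1 ≤ k →
    (c₁ * Xnorm x k ^ gold ≤ Xnorm x (k+1) ∧ Xnorm x (k+1) ≤ c₂ * Xnorm x k ^ gold) ∧
    (|(x k 0 0 : ℝ) * ξ - (x k 0 1 : ℝ)| ≤ c₃ / Xnorm x k ∧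
     |(x k 0 1 : ℝ) * ξ - (x k 1 1 : ℝ)| ≤ c₃ / Xnorm x k) ∧
    (x (k+2) = x (k+1) * Mmat (k+1) * x k ∧ x (k+2) = x k * Mmat k * x (k+1)) ∧
    (Xnorm x k < Xnorm x (k+1) ∧ Xnorm x k < (1 + ξ^2) * |(x k 0 0 : ℝ)|)

def polyNorm (P : Polynomial ℤ) : ℕ := P.support.sup fun i => (P.coeff i).natAbs

noncomputable def distInt (η : ℝ) : ℝ := |η - round η|

noncomputable def ratHeight (α : ℚ) : ℝ := max |(α.num : ℝ)| (α.den : ℝ)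

def IsMinIntPoly (α : ℂ) (P : Polynomial ℤ) : Prop :=
  P ≠ 0 ∧ Polynomial.aeval α P = 0 ∧ P.content = 1 ∧ 0 < P.leadingCoeff ∧
  ∀ Q : Polynomial ℤ, Q ≠ 0 → Polynomial.aeval α Q = 0 → P.degree ≤ Q.degree

noncomputable def Qpoly (x : ℕ → Matrix (Fin 2) (Fin 2) ℤ) (k : ℕ) : Polynomial ℤ :=
  Polynomial.C (x k 0 1 * x (k+1) 1 1 - x k 1 1 * x (k+1) 0 1)
  - Polynomial.C (x k 0 0 * x (k+1) 1 1 - x k 1 1 * x (k+1) 0 0) * Polynomial.X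
  + Polynomial.C (x k 0 0 * x (k+1) 0 1 - x k 0 1 * x (k+1) 0 0) * Polynomial.X ^ 2

/-!
Write `(a, b, c)` for the entries of `x (k + 1)`. Since `a * ξ - b` and `a * ξ ^ 2 - c` are
`O(1 / a)` and the cross product of two consecutive points `(a, b, c)` is linear in the point
before them, products of entries of nearby points can be computed modulo `ℤ` up to `O(1 / a k)`.
This gives `a (k + 3) * ξ ^ 3 ≡ -a k * ξ ^ 3` and `a (k + 6) * ξ ^ 5 ≡ a k * ξ ^ 5`, and shows that
`D k = (a (k + 6) - a k) * ξ ^ 6` satisfies `D k + D (k + 3) ≡ 108 * (-1) ^ k * a k * ξ ^ 3`. Hence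
`a k * ξ ^ 3` and `D k` converge modulo `ℤ` along each residue class of `k` modulo `6`. The limit of
the former has infinite order in `ℝ / ℤ`, for otherwise an integer linear relation would annihilate
three linearly independent consecutive points; so some limit `d` of `D` has infinite order as well.
Along that class `a k * ξ ^ 6` is `n • d + w` up to `O(1 / a k)`, and inhomogeneous Diophantine
approximation makes `n • d + w` as small as `O(1 / n)` for infinitely many `n`.
-/

open Asymptotics Topology

section Congruence

variable {a : ℕ → ℤ} {f g : ℕ → ℝ}

/-- `f k = O(1 / a k)`, the order of magnitude of every error term in the argument. -/
def IsSmall (a : ℕ → ℤ) (f : ℕ → ℝ) : Prop := f =O[atTop] fun k => (a k : ℝ)⁻¹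

theorem IsSmall.congr (hf : IsSmall a f) (hfg : ∀ k, f k = g k) : IsSmall a g :=
  hf.congr_left hfg

theorem IsSmall.bounded_mul (hf : IsSmall a f) (hg : g =O[atTop] (1 : ℕ → ℝ)) :
    IsSmall a fun k => g k * f k := by
  simpa [IsSmall] using hg.mul hf

theorem isBigO_one_neg_one_pow : (fun k : ℕ => (-1 : ℝ) ^ k) =O[atTop] (1 : ℕ → ℝ) :=
  .of_norm_le fun k => by simp

theorem neg_one_pow_sq (k : ℕ) : ((-1 : ℝ) ^ k) ^ 2 = 1 := by
  rw [← pow_mul, pow_mul', neg_one_sq, one_pow]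

theorem IsSmall.sign_mul (hf : IsSmall a f) : IsSmall a fun k => (-1) ^ k * f k :=
  hf.bounded_mul isBigO_one_neg_one_pow

/-- `f k` lies within `O(1 / a k)` of an integer; the distance to the nearest integer is the norm
of `UnitAddCircle`. -/
def NearInt (a : ℕ → ℤ) (f : ℕ → ℝ) : Prop :=
  (fun k => (f k : UnitAddCircle)) =O[atTop] fun k => (a k : ℝ)⁻¹

theorem norm_coe_le_abs_sub_intCast (r : ℝ) (n : ℤ) : ‖(r : UnitAddCircle)‖ ≤ |r - n| :=
  (UnitAddCircle.norm_eq (x := r)).trans_le (round_le r n)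

theorem IsSmall.nearInt (n : ℕ → ℤ) (hf : IsSmall a fun k => f k - n k) : NearInt a f :=
  .trans (.of_norm_le fun k => norm_coe_le_abs_sub_intCast (f k) (n k)) hf.abs_left

theorem NearInt.congr (hf : NearInt a f) (hfg : ∀ k, f k = g k) : NearInt a g :=
  hf.congr_left fun k => congrArg _ (hfg k)

theorem NearInt.add (hf : NearInt a f) (hg : NearInt a g) : NearInt a fun k => f k + g k :=
  IsBigO.add hf hg

theorem NearInt.sub (hf : NearInt a f) (hg : NearInt a g) : NearInt a fun k => f k - g k :=
  IsBigO.sub hf hg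

theorem NearInt.intCast_mul {z : ℕ → ℤ} (hf : NearInt a f)
    (hz : (fun k => (z k : ℝ)) =O[atTop] (1 : ℕ → ℝ)) : NearInt a fun k => z k * f k := by
  have hnorm (k : ℕ) :
      ‖((z k * f k : ℝ) : UnitAddCircle)‖ ≤ ‖(z k : ℝ) * ‖(f k : UnitAddCircle)‖‖ := by
    rw [← zsmul_eq_mul, AddCircle.coe_zsmul]
    simpa [Int.norm_eq_abs] using norm_zsmul_le (z k) (f k : UnitAddCircle)
  simpa [NearInt] using (isBigO_of_le _ hnorm).trans (hz.mul hf.norm_left)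

theorem NearInt.const_mul (hf : NearInt a f) (z : ℤ) : NearInt a fun k => z * f k :=
  hf.intCast_mul (isBigO_const_const _ one_ne_zero _)

theorem NearInt.sign_mul (hf : NearInt a f) : NearInt a fun k => (-1) ^ k * f k :=
  (hf.intCast_mul (z := fun k => (-1) ^ k) (by simpa using isBigO_one_neg_one_pow)).congr
    fun k => by push_cast; rfl

end Congruence

section UnitAddCircle

theorem exists_lt_den_abs_sub_le_of_irrational {d : ℝ} (hd : Irrational d) (M : ℕ) :
    ∃ q : ℚ, M < q.den ∧ |d - q| ≤ 1 / (q.den : ℝ) ^ 2 := by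
  obtain ⟨ε, hε, hpos⟩ := ((hd.eventually_forall_le_dist_cast_rat_of_den_le M).filter_mono
    nhdsWithin_le_nhds |>.and (self_mem_nhdsWithin (s := Set.Ioi (0 : ℝ)))).exists
  obtain ⟨m, hm⟩ := exists_nat_one_div_lt hpos
  obtain ⟨q, hq, hqm⟩ := Real.exists_rat_abs_sub_le_and_den_le d m.succ_pos
  have hden : (1 : ℝ) ≤ q.den := mod_cast q.pos
  refine ⟨q, not_le.1 fun hle => (hm.trans_le (hε q hle)).not_ge ?_, hq.trans ?_⟩
  · refine hq.trans ?_
    push_cast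
    gcongr
    nlinarith
  · rw [sq]
    gcongr
    exact_mod_cast hqm.trans (Nat.le_succ _)

theorem exists_nat_dvd_mul_add {Q : ℕ} (hQ : 0 < Q) {p : ℤ} (hp : IsCoprime p Q) (t : ℤ) :
    ∃ n : ℕ, Q ≤ n ∧ n < 2 * Q ∧ (Q : ℤ) ∣ n * p + t := by
  obtain ⟨u, v, huv⟩ := hp
  obtain ⟨m, hmQ, hm⟩ := Int.existsUnique_equiv_nat (-t * u) (b := Q) (mod_cast hQ)
  obtain ⟨e, he⟩ := hm.symm.dvd
  refine ⟨Q + m, by omega, by omega, p + e * p + t * v, ?_⟩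
  push_cast
  linear_combination p * he - t * huv

theorem irrational_of_not_isOfFinAddOrder {d : ℝ} (hd : ¬IsOfFinAddOrder (d : UnitAddCircle)) :
    Irrational d := by
  rintro ⟨q, rfl⟩
  exact hd (AddCircle.isOfFinAddOrder_iff_exists_rat_eq_div.2 ⟨q, by simp⟩)

theorem frequently_norm_nsmul_add_le {d : UnitAddCircle} (hd : ¬IsOfFinAddOrder d)
    (w : UnitAddCircle) : ∃ᶠ n : ℕ in atTop, ‖n • d + w‖ ≤ 5 / n := by
  obtain ⟨d, rfl⟩ := QuotientAddGroup.mk_surjective d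
  obtain ⟨w, rfl⟩ := QuotientAddGroup.mk_surjective w
  refine frequently_atTop.2 fun M => ?_
  obtain ⟨q, hMq, hq⟩ :=
    exists_lt_den_abs_sub_le_of_irrational (irrational_of_not_isOfFinAddOrder hd) M
  set Q : ℕ := q.den
  set t : ℤ := round (Q * w)
  obtain ⟨n, hQn, hn, e, he⟩ :=
    exists_nat_dvd_mul_add q.pos (Int.isCoprime_iff_nat_coprime.2 (by simpa using q.reduced)) t
  have hQ : (0 : ℝ) < Q := mod_cast q.pos
  have hnpos : (0 : ℝ) < n := hQ.trans_le (mod_cast hQn)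
  have hnQ : (n : ℝ) ≤ 2 * Q := mod_cast hn.le
  have hw : |w - t / Q| ≤ 1 / 2 / Q := by
    rw [le_div_iff₀ hQ, ← abs_of_pos hQ, ← abs_mul, abs_of_pos hQ]
    simpa [sub_mul, mul_comm w, hQ.ne'] using abs_sub_round (Q * w)
  have hsplit : n * d + w - e = n * (d - q) + (w - t / Q) := by
    have hqQ : (q : ℝ) * Q = q.num := mod_cast q.mul_den_eq_num
    have he' : (n * q.num + t : ℝ) = Q * e := mod_cast he
    field_simp
    linear_combination he' + n * hqQ
  refine ⟨n, by omega, ?_⟩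
  calc ‖n • (d : UnitAddCircle) + w‖
      ≤ |n * d + w - e| := by simpa using norm_coe_le_abs_sub_intCast (n * d + w) e
    _ ≤ n * |d - q| + |w - t / Q| := by
        rw [hsplit]
        exact (abs_add_le _ _).trans_eq (by rw [abs_mul, abs_of_pos hnpos])
    _ ≤ 2 * Q * (1 / (Q : ℝ) ^ 2) + 1 / 2 / Q := by gcongr
    _ = 5 / (2 * Q) := by field_simp; norm_num
    _ ≤ 5 / n := by gcongr

end UnitAddCircle

theorem exists_sub_isBigO_of_halving {E : Type*} [NormedAddCommGroup E] [CompleteSpace E]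
    {g : ℕ → E} {e : ℕ → ℝ} (he : ∀ᶠ n in atTop, ‖e (n + 1)‖ ≤ ‖e n‖ / 2)
    (hg : (fun n => g (n + 1) - g n) =O[atTop] e) :
    ∃ L : E, (fun n => g n - L) =O[atTop] e := by
  obtain ⟨C, hC, hbound⟩ := hg.exists_pos
  obtain ⟨N, hN⟩ := eventually_atTop.1 (he.and hbound.bound)
  have hdecay {n : ℕ} (hn : N ≤ n) (j : ℕ) : ‖e (n + j)‖ ≤ ‖e n‖ / 2 ^ j := by
    induction j with
    | zero => simp
    | succ j ih =>
      calc ‖e (n + j + 1)‖ ≤ ‖e (n + j)‖ / 2 := (hN (n + j) (by omega)).1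
        _ ≤ ‖e n‖ / 2 ^ j / 2 := by gcongr
        _ = ‖e n‖ / 2 ^ (j + 1) := by rw [pow_succ, div_div]
  have hstep {n : ℕ} (hn : N ≤ n) (j : ℕ) :
      dist (g (n + j)) (g (n + j + 1)) ≤ 2 * (C * ‖e n‖) / 2 / 2 ^ j := by
    calc dist (g (n + j)) (g (n + j + 1)) = ‖g (n + j + 1) - g (n + j)‖ := dist_eq_norm' _ _
      _ ≤ C * ‖e (n + j)‖ := (hN (n + j) (by omega)).2
      _ ≤ C * (‖e n‖ / 2 ^ j) := by gcongr; exact hdecay hn j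
      _ = 2 * (C * ‖e n‖) / 2 / 2 ^ j := by ring
  obtain ⟨L, hL⟩ := cauchySeq_tendsto_of_complete
    (cauchySeq_of_le_geometric_two (f := fun j => g (N + j)) (hstep le_rfl))
  have hgL : Tendsto g atTop (𝓝 L) :=
    (tendsto_add_atTop_iff_nat N).1 (hL.congr fun j => by rw [add_comm])
  have hlim (n : ℕ) : Tendsto (fun j => g (n + j)) atTop (𝓝 L) :=
    ((tendsto_add_atTop_iff_nat n).2 hgL).congr fun j => by rw [add_comm]
  refine ⟨L, .of_bound (2 * C) ?_⟩
  filter_upwards [eventually_ge_atTop N] with n hn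
  simpa [dist_eq_norm, mul_assoc] using
    dist_le_of_le_geometric_two_of_tendsto₀ (f := fun j => g (n + j)) (hstep hn) (hlim n)

/-- The error `a k * t - y k` made by `y k` as an approximation of `a k * t`. -/
def approxErr (t : ℝ) (a y : ℕ → ℤ) (k : ℕ) : ℝ := a k * t - y k

/-- The entries `a k = x (k + 1) 0 0`, `b k = x (k + 1) 0 1`, `c k = x (k + 1) 1 1` of a Markoff
sequence, with the relations and estimates the argument needs. The fields `wedge₀₁`, `wedge₀₂`,
`wedge₁₂` are the coordinates of the cross product of two consecutive points `(a, b, c)`. -/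
structure MarkoffEntries (ξ : ℝ) (a b c : ℕ → ℤ) : Prop where
  det (k : ℕ) : (a k * c k - b k ^ 2 : ℝ) = 1
  recur₀ (k : ℕ) : (a (k + 3) : ℝ) = 3 * a (k + 1) * a (k + 2) - a k
  recur₁ (k : ℕ) : (b (k + 3) : ℝ) = 3 * a (k + 1) * b (k + 2) - b k
  recur₂ (k : ℕ) : (c (k + 3) : ℝ) = 3 * a (k + 1) * c (k + 2) - c k
  wedge₀₁ (k : ℕ) : (a (k + 1) * b (k + 2) - b (k + 1) * a (k + 2) : ℝ) = -((-1) ^ k * a k)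
  wedge₀₂ (k : ℕ) : (a (k + 1) * c (k + 2) - c (k + 1) * a (k + 2) : ℝ) =
    -(3 * a k + 2 * (-1) ^ k * b k)
  wedge₁₂ (k : ℕ) : (b (k + 1) * c (k + 2) - c (k + 1) * b (k + 2) : ℝ) =
    -(3 * b k + (-1) ^ k * c k)
  small₁ : IsSmall a (approxErr ξ a b)
  small₂ : IsSmall a (approxErr (ξ ^ 2) a c)
  isBigO_succ : (fun k => (a k : ℝ)) =O[atTop] fun k => (a (k + 1) : ℝ)
  natCast_isBigO : (fun k : ℕ => (k : ℝ)) =O[atTop] fun k => (a k : ℝ)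

/-- The increment of `a k * ξ ^ 6` over six steps: modulo `ℤ` it converges along each residue class
of `k` modulo `6`, so that `a k * ξ ^ 6` grows linearly there. -/
def drift (ξ : ℝ) (a : ℕ → ℤ) (k : ℕ) : ℝ := a (k + 6) * ξ ^ 6 - a k * ξ ^ 6

namespace MarkoffEntries

variable {ξ : ℝ} {a b c : ℕ → ℤ} {f g : ℕ → ℝ}

theorem one_isLittleO (h : MarkoffEntries ξ a b c) : (1 : ℕ → ℝ) =o[atTop] fun k => (a k : ℝ) :=
  ((isLittleO_one_left_iff ℝ).2 (by simpa using tendsto_natCast_atTop_atTop)).trans_isBigO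
    h.natCast_isBigO

theorem tendsto_norm (h : MarkoffEntries ξ a b c) : Tendsto (fun k => ‖(a k : ℝ)‖) atTop atTop :=
  (isLittleO_one_left_iff ℝ).1 h.one_isLittleO

theorem eventually_ne_zero (h : MarkoffEntries ξ a b c) : ∀ᶠ k in atTop, (a k : ℝ) ≠ 0 :=
  (h.tendsto_norm.eventually_gt_atTop 0).mono fun _ => norm_pos_iff.1

theorem isBigO_shift (h : MarkoffEntries ξ a b c) (j : ℕ) :
    (fun k => (a k : ℝ)) =O[atTop] fun k => (a (k + j) : ℝ) := by
  induction j with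
  | zero => exact isBigO_refl _ _
  | succ j ih => exact ih.trans (h.isBigO_succ.comp_tendsto (tendsto_add_atTop_nat j))

theorem isLittleO_succ_mul_add_two (h : MarkoffEntries ξ a b c) :
    (fun k => (a k : ℝ)) =o[atTop] fun k => (a (k + 1) * a (k + 2) : ℝ) := by
  simpa using h.isBigO_succ.mul_isLittleO
    (h.one_isLittleO.comp_tendsto (tendsto_add_atTop_nat 2))

theorem add_three_isTheta_mul (h : MarkoffEntries ξ a b c) :
    (fun k => (a (k + 3) : ℝ)) =Θ[atTop] fun k => (a (k + 1) * a (k + 2) : ℝ) := by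
  have hlo : (fun k => (a k : ℝ)) =o[atTop] fun k => (3 * (a (k + 1) * a (k + 2)) : ℝ) :=
    h.isLittleO_succ_mul_add_two.const_mul_right three_ne_zero
  have hrecur (k : ℕ) : (a (k + 3) : ℝ) = -a k + 3 * (a (k + 1) * a (k + 2)) := by
    linear_combination h.recur₀ k
  simp only [hrecur]
  exact (hlo.neg_left.right_isTheta_add.symm).trans
    ((isTheta_const_mul_left three_ne_zero).2 (isTheta_refl _ _))

theorem mul_succ_isBigO (h : MarkoffEntries ξ a b c) :
    (fun k => (a k * a (k + 1) : ℝ)) =O[atTop] fun k => (a (k + 2) : ℝ) := by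
  rw [← map_add_atTop_eq_nat 1, isBigO_map]
  exact h.add_three_isTheta_mul.2

theorem isSmall_iff (h : MarkoffEntries ξ a b c) :
    IsSmall a f ↔ (fun k => a k * f k) =O[atTop] (1 : ℕ → ℝ) := by
  refine ⟨fun hf => ?_, fun hf => ?_⟩
  · refine ((isBigO_refl _ _).mul hf).trans (isBigO_of_le _ fun k => ?_)
    simpa using mul_inv_le_one
  · refine ((isBigO_refl (fun k => (a k : ℝ)⁻¹) _).mul hf).congr' ?_ (by simp)
    filter_upwards [h.eventually_ne_zero] with k hk using inv_mul_cancel_left₀ hk (f k)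

theorem isSmall_mul_shift (h : MarkoffEntries ξ a b c) {j : ℕ} (hf : IsSmall a f)
    (hg : (fun k => a k * g k) =O[atTop] fun k => (a (k + j) : ℝ)) :
    IsSmall a fun k => g k * f (k + j) := by
  have hfj := (h.isSmall_iff.1 hf).comp_tendsto (tendsto_add_atTop_nat j)
  refine h.isSmall_iff.2 (IsBigO.trans ?_ hfj)
  simpa only [mul_assoc] using! hg.mul (isBigO_refl (fun k => f (k + j)) _)

theorem isSmall_shift (h : MarkoffEntries ξ a b c) (hf : IsSmall a f) (j : ℕ) :
    IsSmall a fun k => f (k + j) := by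
  simpa using h.isSmall_mul_shift (g := 1) hf (by simpa using h.isBigO_shift j)

theorem isSmall_succ_mul (h : MarkoffEntries ξ a b c) (hf : IsSmall a f) :
    IsSmall a fun k => a (k + 1) * f (k + 2) :=
  h.isSmall_mul_shift hf h.mul_succ_isBigO

theorem isSmall_add_two_mul (h : MarkoffEntries ξ a b c) (hf : IsSmall a f) :
    IsSmall a fun k => a (k + 2) * f (k + 4) := by
  refine h.isSmall_mul_shift hf (.trans (h.isBigO_succ.mul (isBigO_refl _ _)) ?_)
  exact h.add_three_isTheta_mul.2.trans (h.isBigO_succ.comp_tendsto (tendsto_add_atTop_nat 3))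

theorem isBigO_one_of_isSmall (h : MarkoffEntries ξ a b c) (hf : IsSmall a f) :
    f =O[atTop] (1 : ℕ → ℝ) :=
  hf.trans <| (h.one_isLittleO.isBigO.inv_rev (by simp)).congr_right (by simp)

theorem isSmall_mul (h : MarkoffEntries ξ a b c) (hf : IsSmall a f) (hg : IsSmall a g) :
    IsSmall a fun k => f k * g k :=
  hg.bounded_mul (h.isBigO_one_of_isSmall hf)

theorem isSmall_add_three_mul_mul (h : MarkoffEntries ξ a b c) (hf : IsSmall a f)
    (hg : IsSmall a g) : IsSmall a fun k => a (k + 3) * (f (k + 2) * g (k + 2)) := by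
  have hprod : IsSmall a fun k => a k * (f k * g k) := by
    simpa only [mul_assoc] using hg.bounded_mul (h.isSmall_iff.1 hf)
  refine IsBigO.trans ?_ (h.isSmall_succ_mul hprod)
  simpa only [mul_assoc] using
    h.add_three_isTheta_mul.1.mul (isBigO_refl (fun k => f (k + 2) * g (k + 2)) _)

local notation "δ" => approxErr ξ a b
local notation "η" => approxErr (ξ ^ 2) a c

theorem wedge_quadErr (h : MarkoffEntries ξ a b c) (k : ℕ) :
    a (k + 2) * η (k + 1) - a (k + 1) * η (k + 2) = -(3 * a k + 2 * (-1) ^ k * b k) := by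
  simp only [approxErr]
  linear_combination h.wedge₀₂ k

theorem wedge_two_linErr (h : MarkoffEntries ξ a b c) (k : ℕ) :
    a (k + 4) * δ (k + 2) - a (k + 2) * δ (k + 4) = (-1) ^ k * a (k + 3) := by
  simp only [approxErr]
  linear_combination a (k + 2) * h.recur₁ (k + 1) - b (k + 2) * h.recur₀ (k + 1) + h.wedge₀₁ k
    + 3 * a (k + 2) * h.wedge₀₁ (k + 1) - (-1) ^ k * h.recur₀ k

theorem three_mul_mul (h : MarkoffEntries ξ a b c) (k : ℕ) :
    (3 * a (k + 2) * b (k + 1) : ℝ) = b (k + 3) + b k + 3 * (-1) ^ k * a k := by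
  linear_combination -3 * h.wedge₀₁ k - h.recur₁ k

theorem wedge_two_quadErr (h : MarkoffEntries ξ a b c) (k : ℕ) :
    a (k + 4) * η (k + 2) - a (k + 2) * η (k + 4) = -3 * a (k + 3) + 2 * (-1) ^ k * b (k + 3) := by
  simp only [approxErr]
  linear_combination a (k + 2) * h.recur₂ (k + 1) - c (k + 2) * h.recur₀ (k + 1) + h.wedge₀₂ k
    + 3 * a (k + 2) * h.wedge₀₂ (k + 1) + 3 * h.recur₀ k + 2 * (-1) ^ k * h.three_mul_mul k
    + 6 * a k * neg_one_pow_sq k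

theorem mul_wedge_sub (h : MarkoffEntries ξ a b c) {f : ℕ → ℝ}
    (hf : ∀ k, f (k + 3) = 3 * a (k + 1) * f (k + 2) - f k) (k : ℕ) :
    3 * (a (k + 3) * (a (k + 4) * f (k + 4) - a (k + 2) * f (k + 2))) =
      a (k + 4) * f (k + 5) - a (k + 1) * f (k + 2) := by
  linear_combination -a (k + 4) * hf (k + 2) + f (k + 2) * h.recur₀ (k + 1)

theorem isSmall_mul_wedge_sub (h : MarkoffEntries ξ a b c) (hsmall : IsSmall a f)
    (hf : ∀ k, f (k + 3) = 3 * a (k + 1) * f (k + 2) - f k) :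
    IsSmall a fun k => a (k + 3) * (a (k + 4) * f (k + 4) - a (k + 2) * f (k + 2)) :=
  (((h.isSmall_shift (h.isSmall_succ_mul hsmall) 3).sub
    (h.isSmall_succ_mul hsmall)).const_mul_left (3 : ℝ)⁻¹).congr_left
    fun k => by linear_combination (3 : ℝ)⁻¹ * (-h.mul_wedge_sub hf k)

theorem approxErr_recur (h : MarkoffEntries ξ a b c) {t : ℝ} {y : ℕ → ℤ}
    (hy : ∀ k, (y (k + 3) : ℝ) = 3 * a (k + 1) * y (k + 2) - y k) (k : ℕ) :
    approxErr t a y (k + 3) = 3 * a (k + 1) * approxErr t a y (k + 2) - approxErr t a y k := by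
  simp only [approxErr]
  linear_combination t * h.recur₀ k - hy k

theorem mul_mul_linErr (h : MarkoffEntries ξ a b c) (k : ℕ) :
    3 * a (k + 3) * a (k + 2) * δ (k + 2) =
      (-1) ^ k * a (k + 3) + a (k + 2) * δ (k + 4) + a (k + 1) * δ (k + 2) := by
  linear_combination h.wedge_two_linErr k - δ (k + 2) * h.recur₀ (k + 1)

theorem mul_mul_quadErr (h : MarkoffEntries ξ a b c) (k : ℕ) :
    3 * a (k + 3) * a (k + 2) * η (k + 2) =
      -3 * a (k + 3) + 2 * (-1) ^ k * b (k + 3) + a (k + 2) * η (k + 4) +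
        a (k + 1) * η (k + 2) := by
  linear_combination h.wedge_two_quadErr k - η (k + 2) * h.recur₀ (k + 1)

theorem sq_mul_quadErr (h : MarkoffEntries ξ a b c) (k : ℕ) :
    3 * a (k + 2) ^ 2 * η (k + 3) =
      -3 * a k - 2 * (-1) ^ k * b k + a (k + 2) * η (k + 4) + a (k + 1) * η (k + 2) := by
  linear_combination h.wedge_quadErr k - a (k + 2) * h.approxErr_recur (t := ξ ^ 2) h.recur₂ (k + 1)

theorem nearInt_pow_three (h : MarkoffEntries ξ a b c) :
    NearInt a fun k => a (k + 3) * ξ ^ 3 + a k * ξ ^ 3 := by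
  refine IsSmall.nearInt (fun k => 3 * c (k + 2) * b (k + 1) - 3 * (-1) ^ k * c k) ?_
  have hδ := (h.isSmall_succ_mul h.small₁).const_mul_left (3 * ξ ^ 2)
  have hη := (h.isSmall_succ_mul h.small₂).const_mul_left (3 * ξ)
  have hηδ := (h.isSmall_mul (h.isSmall_shift h.small₂ 2)
    (h.isSmall_shift h.small₁ 1)).const_mul_left 3
  refine ((hδ.add hη).sub (hηδ.add (h.small₂.sign_mul.const_mul_left 3))).congr_left fun k => ?_
  simp only [approxErr]
  push_cast
  linear_combination -3 * ξ ^ 2 * h.wedge₀₁ k - ξ ^ 3 * h.recur₀ k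

theorem nearInt_pow_four (h : MarkoffEntries ξ a b c) :
    NearInt a fun k => a (k + 3) * ξ ^ 4 + a k * ξ ^ 4 + 6 * ((-1) ^ k * (a k * ξ ^ 3)) := by
  refine IsSmall.nearInt (fun k => 3 * c (k + 2) * c (k + 1) - 9 * c k) ?_
  have hη := (h.isSmall_succ_mul h.small₂).const_mul_left (6 * ξ ^ 2)
  have hηη := (h.isSmall_mul (h.isSmall_shift h.small₂ 2)
    (h.isSmall_shift h.small₂ 1)).const_mul_left 3
  refine ((hη.add (h.small₁.sign_mul.const_mul_left (6 * ξ ^ 2))).sub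
    (hηη.add (h.small₂.const_mul_left 9))).congr_left fun k => ?_
  simp only [approxErr]
  push_cast
  linear_combination -3 * ξ ^ 2 * h.wedge₀₂ k - ξ ^ 4 * h.recur₀ k

theorem nearInt_mul_pow_three (h : MarkoffEntries ξ a b c) :
    NearInt a fun k => 3 * a (k + 4) * a (k + 2) * ξ ^ 3 := by
  refine IsSmall.nearInt (fun k => 3 * c (k + 4) * b (k + 2) + 3 * (-1) ^ k * c (k + 3)) ?_
  have hδ := (h.isSmall_add_two_mul h.small₁).const_mul_left (3 * ξ ^ 2)
  have hη := (h.isSmall_add_two_mul h.small₂).const_mul_left (3 * ξ)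
  have hηδ := (h.isSmall_mul (h.isSmall_shift h.small₂ 4)
    (h.isSmall_shift h.small₁ 2)).const_mul_left 3
  refine ((hδ.add hη).add (((h.isSmall_shift h.small₂ 3).sign_mul.const_mul_left 3).sub
    hηδ)).congr_left fun k => ?_
  have hwedge := h.wedge_two_linErr k
  simp only [approxErr] at hwedge ⊢
  push_cast
  linear_combination -3 * ξ ^ 2 * hwedge

theorem nearInt_mul_pow_four (h : MarkoffEntries ξ a b c) :
    NearInt a fun k =>
      3 * a (k + 4) * a (k + 2) * ξ ^ 4 - 6 * ((-1) ^ k * (a (k + 3) * ξ ^ 3)) := by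
  refine IsSmall.nearInt (fun k => 3 * c (k + 4) * c (k + 2) - 9 * c (k + 3)) ?_
  have hη := (h.isSmall_add_two_mul h.small₂).const_mul_left (6 * ξ ^ 2)
  have hηη := (h.isSmall_mul (h.isSmall_shift h.small₂ 4)
    (h.isSmall_shift h.small₂ 2)).const_mul_left 3
  have hδ := (h.isSmall_shift h.small₁ 3).sign_mul.const_mul_left (6 * ξ ^ 2)
  refine (hη.sub (((h.isSmall_shift h.small₂ 3).const_mul_left 9).add
    (hδ.add hηη))).congr_left fun k => ?_
  have hwedge := h.wedge_two_quadErr k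
  simp only [approxErr] at hwedge ⊢
  push_cast
  linear_combination -3 * ξ ^ 2 * hwedge

theorem nearInt_mul_pow_five (h : MarkoffEntries ξ a b c) :
    NearInt a fun k => 3 * a (k + 4) * a (k + 2) * ξ ^ 5 + a (k + 3) * ξ ^ 5 + a k * ξ ^ 5 +
      6 * ((-1) ^ k * (a k * ξ ^ 4)) - 9 * ((-1) ^ k * (a (k + 3) * ξ ^ 4)) := by
  suffices hT : NearInt a fun k =>
      3 * a (k + 4) * a (k + 2) * ξ ^ 5 + a (k + 3) * ξ ^ 5 + a k * ξ ^ 5 +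
        6 * ((-1) ^ k * (a k * ξ ^ 4)) - 9 * ((-1) ^ k * (a (k + 3) * ξ ^ 4)) +
        9 * (a (k + 3) * ξ ^ 3 + a k * ξ ^ 3) from
    (hT.sub (h.nearInt_pow_three.const_mul 9)).congr fun k => by push_cast; ring
  refine IsSmall.nearInt (fun k => 9 * c (k + 3) * c (k + 2) * b (k + 2)) ?_
  have hη := ((h.isSmall_add_two_mul h.small₂).add
    (h.isSmall_succ_mul h.small₂)).const_mul_left (6 * ξ ^ 3)
  have hδ := ((h.isSmall_add_two_mul h.small₁).add
    (h.isSmall_succ_mul h.small₁)).const_mul_left (3 * ξ ^ 4)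
  have hsδ := (IsSmall.sign_mul
    (h.small₁.sub (h.isSmall_shift h.small₁ 3))).const_mul_left (6 * ξ ^ 3)
  have hηδ := (h.isSmall_add_three_mul_mul h.small₂ h.small₁).const_mul_left (9 * ξ ^ 2)
  have hlin : IsSmall a fun k => ξ * η (k + 2) + ξ ^ 2 * δ (k + 2) :=
    ((h.isSmall_shift h.small₂ 2).const_mul_left ξ).add
      ((h.isSmall_shift h.small₁ 2).const_mul_left (ξ ^ 2))
  have haη : IsSmall a fun k => a (k + 2) * η (k + 3) :=
    h.isSmall_shift (h.isSmall_succ_mul h.small₂) 1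
  have hcross := (h.isSmall_mul haη hlin).const_mul_left 9
  have hcubic := (h.isSmall_mul (h.isSmall_shift h.small₂ 3) (h.isSmall_mul
    (h.isSmall_shift h.small₂ 2) (h.isSmall_shift h.small₁ 2))).const_mul_left 9
  refine ((hη.add hδ).add ((hsδ.sub (hηδ.add hcross)).add hcubic)).congr_left fun k => ?_
  have hδ₂ := h.mul_mul_linErr k
  have hη₂ := h.mul_mul_quadErr k
  have hη₃ := h.sq_mul_quadErr k
  simp only [approxErr] at hδ₂ hη₂ hη₃ ⊢
  push_cast
  linear_combination -3 * ξ ^ 4 * hδ₂ - 3 * ξ ^ 3 * (hη₂ + hη₃) -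
    3 * a (k + 2) * ξ ^ 5 * h.recur₀ (k + 1) - ξ ^ 5 * h.recur₀ k

theorem isSmall_sq_sub_sq (h : MarkoffEntries ξ a b c) :
    IsSmall a fun k => 3 * ((a (k + 4) ^ 2 - a (k + 2) ^ 2) * η (k + 3)) +
      (3 + 2 * (-1) ^ k * ξ) * (3 * a (k + 4) * a (k + 2) - a (k + 3) - a k) := by
  have hη : IsSmall a fun k => a (k + 4) * η (k + 5) - a (k + 1) * η (k + 2) :=
    (h.isSmall_shift (h.isSmall_succ_mul h.small₂) 3).sub (h.isSmall_succ_mul h.small₂)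
  have hδ := ((h.isSmall_add_two_mul h.small₁).const_mul_left 3).sub
    (h.small₁.add (h.isSmall_shift h.small₁ 3))
  refine (hη.add (IsSmall.sign_mul hδ |>.const_mul_left 2)).congr_left fun k => ?_
  have hη₃ := h.sq_mul_quadErr k
  have hη₄ := h.wedge_quadErr (k + 2)
  have hw := h.wedge_two_quadErr k
  have hr := h.approxErr_recur (t := ξ ^ 2) h.recur₂ (k + 2)
  have hwδ := h.wedge_two_linErr k
  simp only [approxErr] at hη₃ hη₄ hw hr hwδ ⊢
  linear_combination hη₃ - 3 * a (k + 4) * hη₄ + a (k + 4) * hr - hw - 6 * (-1) ^ k * hwδ -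
    6 * a (k + 3) * neg_one_pow_sq k

theorem isSmall_mul_wedge_mul (h : MarkoffEntries ξ a b c) (hf : IsSmall a f) :
    IsSmall a fun k => a (k + 3) * (η (k + 4) * f (k + 4) - η (k + 2) * f (k + 2)) :=
  ((h.isSmall_mul (h.isSmall_shift (h.isSmall_succ_mul h.small₂) 2) (h.isSmall_shift hf 4)).sub
    (h.isSmall_add_three_mul_mul h.small₂ hf)).congr_left fun k => by ring

theorem mul_sq_sub_sq (h : MarkoffEntries ξ a b c) (k : ℕ) :
    (9 * a (k + 3) * (a (k + 4) ^ 2 - a (k + 2) ^ 2) : ℝ) = a (k + 6) - a k := by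
  linear_combination 3 * a (k + 2) * h.recur₀ (k + 1) - 3 * a (k + 4) * h.recur₀ (k + 2) -
    h.recur₀ (k + 3) + h.recur₀ k

theorem nearInt_add_six_mul (h : MarkoffEntries ξ a b c) {y : ℕ → ℤ} {t : ℝ}
    (hsmall : IsSmall a (approxErr t a y))
    (hy : ∀ k, (y (k + 3) : ℝ) = 3 * a (k + 1) * y (k + 2) - y k) :
    NearInt a fun k => (a (k + 6) - a k) * (t * ξ ^ 4) +
      (9 + 6 * (-1) ^ k * ξ) * (3 * a (k + 4) * a (k + 2) - a (k + 3) - a k) * (t * ξ ^ 2) := by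
  refine IsSmall.nearInt
    (fun k => 9 * c (k + 3) * (c (k + 4) * y (k + 4) - c (k + 2) * y (k + 2))) ?_
  set ε := approxErr t a y
  have hη := (h.isSmall_mul_wedge_sub h.small₂ (h.approxErr_recur h.recur₂)).const_mul_left
    (9 * t * ξ ^ 2)
  have hε := (h.isSmall_mul_wedge_sub hsmall (h.approxErr_recur hy)).const_mul_left (9 * ξ ^ 4)
  have hηε := (h.isSmall_mul_wedge_mul hsmall).const_mul_left (9 * ξ ^ 2)
  have hsq := h.isSmall_sq_sub_sq.const_mul_left (3 * t * ξ ^ 2)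
  have hcubic : IsSmall a fun k => (t * (a (k + 4) * η (k + 4) - a (k + 2) * η (k + 2)) +
      ξ ^ 2 * (a (k + 4) * ε (k + 4) - a (k + 2) * ε (k + 2)) -
        (η (k + 4) * ε (k + 4) - η (k + 2) * ε (k + 2))) * η (k + 3) := by
    have hbounded {f : ℕ → ℝ} (hf : IsSmall a f) (j : ℕ) :
        (fun k => a (k + j) * f (k + j)) =O[atTop] (1 : ℕ → ℝ) :=
      (h.isSmall_iff.1 hf).comp_tendsto (tendsto_add_atTop_nat j)
    have hprod (j : ℕ) : (fun k => η (k + j) * ε (k + j)) =O[atTop] (1 : ℕ → ℝ) :=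
      h.isBigO_one_of_isSmall (h.isSmall_shift (h.isSmall_mul h.small₂ hsmall) j)
    exact (h.isSmall_shift h.small₂ 3).bounded_mul
      (((((hbounded h.small₂ 4).sub (hbounded h.small₂ 2)).const_mul_left t).add
        (((hbounded hsmall 4).sub (hbounded hsmall 2)).const_mul_left _)).sub
        ((hprod 4).sub (hprod 2)))
  refine (((hη.add hε).sub hηε).add (hsq.sub (hcubic.const_mul_left 9))).congr_left fun k => ?_
  simp only [ε, approxErr]
  push_cast
  linear_combination t * ξ ^ 4 * h.mul_sq_sub_sq k

theorem nearInt_add_six_pow_five (h : MarkoffEntries ξ a b c) :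
    NearInt a fun k => a (k + 6) * ξ ^ 5 - a k * ξ ^ 5 := by
  have h₃ := (h.nearInt_mul_pow_three.add
    (h.nearInt_pow_three.const_mul (-1))).const_mul 9
  have h₄ := ((h.nearInt_mul_pow_four.sub h.nearInt_pow_four).sign_mul).const_mul 6
  refine ((h.nearInt_add_six_mul h.small₁ h.recur₁).sub
    ((h₃.add h₄).add (h.nearInt_pow_three.const_mul 36))).congr fun k => ?_
  push_cast
  linear_combination 36 * ξ ^ 3 * (a (k + 3) + a k) * neg_one_pow_sq k

theorem nearInt_drift_sub (h : MarkoffEntries ξ a b c) :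
    NearInt a fun k => drift ξ a k -
      (90 * (a k * ξ ^ 4) + 324 * ((-1) ^ k * (a k * ξ ^ 3)) +
        12 * ((-1) ^ k * (a k * ξ ^ 5 + a (k + 3) * ξ ^ 5))) := by
  have h₄ := (h.nearInt_mul_pow_four.sub h.nearInt_pow_four).const_mul 9
  have h₅ := h.nearInt_mul_pow_five.sign_mul.const_mul 6
  refine ((h.nearInt_add_six_mul h.small₂ h.recur₂).sub
    ((h₄.add (h.nearInt_pow_three.sign_mul.const_mul 54)).add
      (h₅.add (h.nearInt_pow_four.const_mul 54)))).congr fun k => ?_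
  simp only [drift]
  push_cast
  linear_combination ξ ^ 4 * (54 * a (k + 3) - 36 * a k) * neg_one_pow_sq k

theorem nearInt_shift (h : MarkoffEntries ξ a b c) (hf : NearInt a f) (j : ℕ) :
    NearInt a fun k => f (k + j) :=
  h.isSmall_shift (f := fun k => ‖(f k : UnitAddCircle)‖) hf.norm_left j |>.of_norm_left

theorem nearInt_drift_add_drift (h : MarkoffEntries ξ a b c) :
    NearInt a fun k => drift ξ a k + drift ξ a (k + 3) - 108 * ((-1) ^ k * (a k * ξ ^ 3)) := by
  have hD := h.nearInt_drift_sub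
  have h₃ := h.nearInt_pow_three.sign_mul.const_mul 324
  have h₅ := h.nearInt_add_six_pow_five.sign_mul.const_mul 12
  refine ((hD.add (h.nearInt_shift hD 3)).add
    (((h.nearInt_pow_four.const_mul 90).sub h₃).sub h₅)).congr fun k => ?_
  simp only [drift]
  push_cast
  ring

theorem nearInt_add_six_pow_three (h : MarkoffEntries ξ a b c) :
    NearInt a fun k => a (k + 6) * ξ ^ 3 - a k * ξ ^ 3 :=
  ((h.nearInt_shift h.nearInt_pow_three 3).sub h.nearInt_pow_three).congr fun k => by ring

theorem nearInt_drift_sub_drift (h : MarkoffEntries ξ a b c) :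
    NearInt a fun k => drift ξ a (k + 6) - drift ξ a k := by
  have hD := h.nearInt_drift_add_drift
  refine (((h.nearInt_shift hD 3).sub hD).sub
    (h.nearInt_pow_three.sign_mul.const_mul 108)).congr fun k => ?_
  push_cast
  ring

theorem triple_product_eq (h : MarkoffEntries ξ a b c) (k : ℕ) :
    (a k * (b (k + 1) * c (k + 2) - c (k + 1) * b (k + 2)) -
      b k * (a (k + 1) * c (k + 2) - c (k + 1) * a (k + 2)) +
      c k * (a (k + 1) * b (k + 2) - b (k + 1) * a (k + 2)) : ℝ) = -2 * (-1) ^ k := by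
  rw [h.wedge₀₁, h.wedge₀₂, h.wedge₁₂]
  linear_combination -2 * (-1) ^ k * h.det k

theorem tendsto_zero_of_isSmall (h : MarkoffEntries ξ a b c) (hf : IsSmall a f) :
    Tendsto f atTop (𝓝 0) :=
  hf.trans_tendsto (tendsto_inv₀_cobounded.comp (tendsto_norm_atTop_iff_cobounded.1 h.tendsto_norm))

section PowThree

variable {l : Filter ℕ} {N : ℤ} {w : ℕ → ℤ}

theorem isBigO_relation_coeff (h : MarkoffEntries ξ a b c) (hl : l ≤ atTop)
    (hw : (fun k => N * (a k * ξ ^ 3) - w k) =O[l] fun k => (a k : ℝ)⁻¹) :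
    (fun k => (N * b k * c k - a k * w k : ℝ)) =O[l] (1 : ℕ → ℝ) := by
  have hmul {f : ℕ → ℝ} (hf : f =O[l] fun k => (a k : ℝ)⁻¹) :
      (fun k => a k * f k) =O[l] (1 : ℕ → ℝ) :=
    ((isBigO_refl _ _).mul hf).trans (isBigO_of_le _ fun k => by simpa using mul_inv_le_one)
  have hηδ := (h.isBigO_one_of_isSmall (h.isSmall_mul h.small₂ h.small₁)).mono hl
  refine (((hmul hw).add (hηδ.const_mul_left N)).sub
    (((hmul (h.small₂.mono hl)).const_mul_left (N * ξ)).add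
      ((hmul (h.small₁.mono hl)).const_mul_left (N * ξ ^ 2)))).congr_left fun k => ?_
  simp only [approxErr]
  ring

theorem isBigO_relation_eval (h : MarkoffEntries ξ a b c) (hl : l ≤ atTop)
    (hw : (fun k => N * (a k * ξ ^ 3) - w k) =O[l] fun k => (a k : ℝ)⁻¹) :
    (fun k => (b k * w k - N * c k ^ 2) + (N * b k * c k - a k * w k) * ξ + N * ξ ^ 2) =O[l]
      fun k => (a k : ℝ)⁻¹ * (a k : ℝ)⁻¹ := by
  have hδ := h.small₁.mono hl
  have hη := h.small₂.mono hl
  refine ((hδ.mul hw).sub ((((hη.mul hη).const_mul_left (N : ℝ)).sub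
    ((hδ.mul hη).const_mul_left (N * ξ))).add
      ((hδ.mul hδ).const_mul_left (N * ξ ^ 2)))).congr_left fun k => ?_
  simp only [approxErr]
  linear_combination N * ξ ^ 2 * h.det k

-- The quadratic form on the left is nearly `a (i k)` times its value at `(1, ξ, ξ ^ 2)`, hence an
-- integer tending to `0`.
theorem eventually_relation_eq_zero (h : MarkoffEntries ξ a b c) (hl : l ≤ atTop)
    (hw : (fun k => N * (a k * ξ ^ 3) - w k) =O[l] fun k => (a k : ℝ)⁻¹) {i : ℕ → ℕ}
    (hi : Tendsto i l atTop) (ha : (fun k => (a (i k) : ℝ)) =O[l] fun k => (a k : ℝ)) :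
    ∀ᶠ k in l, (b k * w k - N * c k ^ 2) * a (i k) + (N * b k * c k - a k * w k) * b (i k) +
      N * c (i k) = 0 := by
  have heval : Tendsto (fun k => a (i k) * ((b k * w k - N * c k ^ 2) +
      (N * b k * c k - a k * w k) * ξ + N * ξ ^ 2)) l (𝓝 0) := by
    refine (ha.mul (h.isBigO_relation_eval hl hw)).trans_tendsto ?_
    refine ((h.tendsto_zero_of_isSmall (isBigO_refl _ _)).mono_left hl).congr' ?_
    filter_upwards [hl h.eventually_ne_zero] with k hk using (mul_inv_cancel_left₀ hk _).symm
  have hδ := (h.tendsto_zero_of_isSmall h.small₁).comp hi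
  have hη := (h.tendsto_zero_of_isSmall h.small₂).comp hi
  have hcoeff := ((h.isBigO_relation_coeff hl hw).mul (isBigO_refl _ l)).trans_tendsto
    (by simpa using! hδ)
  have hreal := (heval.sub hcoeff).sub (hη.const_mul (N : ℝ))
  simp only [mul_zero, sub_zero] at hreal
  refine tendsto_pure.1 (nhds_discrete ℤ ▸ Int.isClosedEmbedding_coe_real.tendsto_nhds_iff.2 ?_)
  refine (hreal.congr fun k => ?_).trans_eq (by simp)
  simp only [approxErr, Function.comp_apply]
  push_cast
  ring

theorem isBigO_sub (h : MarkoffEntries ξ a b c) (j : ℕ) :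
    (fun k => (a (k - j) : ℝ)) =O[atTop] fun k => (a k : ℝ) := by
  rw [← map_add_atTop_eq_nat j, isBigO_map]
  simpa [Function.comp_def] using h.isBigO_shift j

-- Otherwise one integer relation would annihilate three consecutive points, against
-- `triple_product_eq`.
theorem not_isBigO_nsmul_pow_three (h : MarkoffEntries ξ a b c) [l.NeBot] (hl : l ≤ atTop) {N : ℕ}
    (hN : N ≠ 0) :
    ¬(fun k => N • ((a k * ξ ^ 3 : ℝ) : UnitAddCircle)) =O[l] fun k => (a k : ℝ)⁻¹ := by
  intro hO
  set w : ℕ → ℤ := fun k => round (N * (a k * ξ ^ 3))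
  have hw : (fun k => ((N : ℤ) : ℝ) * (a k * ξ ^ 3) - w k) =O[l] fun k => (a k : ℝ)⁻¹ := by
    refine .trans (isBigO_of_le _ fun k => ?_) hO
    rw [← AddCircle.coe_nsmul, UnitAddCircle.norm_eq, nsmul_eq_mul]
    rfl
  have hrel (j : ℕ) := h.eventually_relation_eq_zero hl hw
    ((tendsto_sub_atTop_nat j).mono_left hl) ((h.isBigO_sub j).mono hl)
  obtain ⟨k, ⟨h₂, h₁⟩, hk⟩ := ((hrel 2).and (hrel 1) |>.and (hl (eventually_ge_atTop 2))).exists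
  obtain ⟨k, rfl⟩ := Nat.exists_eq_add_of_le' hk
  rw [Nat.add_sub_cancel] at h₂
  rw [show k + 2 - 1 = k + 1 from rfl] at h₁
  apply_fun ((↑) : ℤ → ℝ) at h₁ h₂
  push_cast at h₁ h₂
  have hzero : (N : ℝ) * (-2 * (-1) ^ k) = 0 := by
    linear_combination (a (k + 1) * b (k + 2) - b (k + 1) * a (k + 2)) * h₂ -
      (a k * b (k + 2) - b k * a (k + 2)) * h₁ - N * h.triple_product_eq k +
      N * c (k + 2) * (a (k + 1) * b k - b (k + 1) * a k) * h.det (k + 2)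
  simp [hN] at hzero

end PowThree

section ResidueClasses

theorem tendsto_add_six_mul (r : ℕ) : Tendsto (fun n => r + 6 * n) atTop atTop :=
  tendsto_atTop_mono (fun n => (by omega : n ≤ r + 6 * n)) tendsto_id

theorem eventually_norm_inv_class_succ_le (h : MarkoffEntries ξ a b c) (r : ℕ) :
    ∀ᶠ n in atTop, ‖(a (r + 6 * (n + 1)) : ℝ)⁻¹‖ ≤ ‖(a (r + 6 * n) : ℝ)⁻¹‖ / 2 := by
  have hsix : (fun k => (a k : ℝ)) =o[atTop] fun k => (a (k + 6) : ℝ) :=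
    (h.isLittleO_succ_mul_add_two.trans_isTheta h.add_three_isTheta_mul.symm).trans_isBigO
      ((h.isBigO_shift 3).comp_tendsto (tendsto_add_atTop_nat 3))
  filter_upwards [(tendsto_add_six_mul r).eventually (hsix.def one_half_pos),
    (tendsto_add_six_mul r).eventually h.eventually_ne_zero] with n hn hne
  rw [norm_inv, norm_inv, div_eq_mul_inv, ← mul_inv]
  exact inv_anti₀ (by positivity) (by rw [show r + 6 * (n + 1) = r + 6 * n + 6 from rfl]; linarith)

theorem exists_class_sub_isBigO (h : MarkoffEntries ξ a b c)
    (hf : NearInt a fun k => f (k + 6) - f k) (r : ℕ) :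
    ∃ L : UnitAddCircle, (fun n => (f (r + 6 * n) : UnitAddCircle) - L) =O[atTop]
      fun n => (a (r + 6 * n) : ℝ)⁻¹ :=
  exists_sub_isBigO_of_halving (h.eventually_norm_inv_class_succ_le r)
    (hf.comp_tendsto (tendsto_add_six_mul r))

theorem tendsto_of_class_sub_isBigO (h : MarkoffEntries ξ a b c) {r : ℕ} {F : ℕ → UnitAddCircle}
    {L : UnitAddCircle} (hF : (fun n => F n - L) =O[atTop] fun n => (a (r + 6 * n) : ℝ)⁻¹) :
    Tendsto F atTop (𝓝 L) :=
  tendsto_sub_nhds_zero_iff.1 <| hF.trans_tendsto <|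
    (h.tendsto_zero_of_isSmall (isBigO_refl _ _)).comp (tendsto_add_six_mul r)

theorem not_isOfFinAddOrder_of_sub_isBigO (h : MarkoffEntries ξ a b c) {r : ℕ} {θ : UnitAddCircle}
    (hθ : (fun n => ((a (r + 6 * n) * ξ ^ 3 : ℝ) : UnitAddCircle) - θ) =O[atTop]
      fun n => (a (r + 6 * n) : ℝ)⁻¹) : ¬IsOfFinAddOrder θ := by
  intro hfin
  obtain ⟨N, hN, hNθ⟩ := isOfFinAddOrder_iff_nsmul_eq_zero.1 hfin
  refine h.not_isBigO_nsmul_pow_three (tendsto_add_six_mul r) hN.ne' (isBigO_map.2 ?_)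
  refine (isBigO_of_le' (c := (N : ℝ)) _ fun n => ?_).trans hθ
  have hsub : N • ((a (r + 6 * n) * ξ ^ 3 : ℝ) : UnitAddCircle) =
      N • (((a (r + 6 * n) * ξ ^ 3 : ℝ) : UnitAddCircle) - θ) := by
    rw [smul_sub, hNθ, sub_zero]
  exact (congrArg norm hsub).trans_le norm_nsmul_le

theorem drift_limit_add_drift_limit (h : MarkoffEntries ξ a b c) {θ d₂ d₅ : UnitAddCircle}
    (hθ : Tendsto (fun n => ((a (2 + 6 * n) * ξ ^ 3 : ℝ) : UnitAddCircle)) atTop (𝓝 θ))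
    (hd₂ : Tendsto (fun n => (drift ξ a (2 + 6 * n) : UnitAddCircle)) atTop (𝓝 d₂))
    (hd₅ : Tendsto (fun n => (drift ξ a (5 + 6 * n) : UnitAddCircle)) atTop (𝓝 d₅)) :
    d₂ + d₅ = 108 • θ := by
  have hzero := h.tendsto_of_class_sub_isBigO (L := 0) <|
    (h.nearInt_drift_add_drift.comp_tendsto (tendsto_add_six_mul 2)).congr_left
      fun n => (sub_zero _).symm
  refine sub_eq_zero.1 (tendsto_nhds_unique ((hd₂.add hd₅).sub (hθ.const_smul 108)) ?_)
  refine hzero.congr fun n => ?_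
  have hsign : (-1 : ℝ) ^ (2 + 6 * n) = 1 := Even.neg_one_pow (by rw [Nat.even_iff]; omega)
  rw [← AddCircle.coe_nsmul, ← AddCircle.coe_add, ← AddCircle.coe_sub,
    show 5 + 6 * n = 2 + 6 * n + 3 by ring]
  simp [hsign]

theorem exists_not_isOfFinAddOrder_drift (h : MarkoffEntries ξ a b c) :
    ∃ (r : ℕ) (d : UnitAddCircle), ¬IsOfFinAddOrder d ∧
      (fun n => (drift ξ a (r + 6 * n) : UnitAddCircle) - d) =O[atTop]
        fun n => (a (r + 6 * n) : ℝ)⁻¹ := by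
  obtain ⟨θ, hθ⟩ := h.exists_class_sub_isBigO (f := fun k => a k * ξ ^ 3)
    h.nearInt_add_six_pow_three 2
  obtain ⟨d₂, hd₂⟩ := h.exists_class_sub_isBigO h.nearInt_drift_sub_drift 2
  obtain ⟨d₅, hd₅⟩ := h.exists_class_sub_isBigO h.nearInt_drift_sub_drift 5
  by_contra! hfin
  have hd₂fin : IsOfFinAddOrder d₂ := by_contra fun hd => hfin 2 d₂ hd hd₂
  have hd₅fin : IsOfFinAddOrder d₅ := by_contra fun hd => hfin 5 d₅ hd hd₅
  have hsum := h.drift_limit_add_drift_limit (h.tendsto_of_class_sub_isBigO hθ)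
    (h.tendsto_of_class_sub_isBigO hd₂) (h.tendsto_of_class_sub_isBigO hd₅)
  refine h.not_isOfFinAddOrder_of_sub_isBigO hθ (.of_nsmul ?_ (by norm_num : 108 ≠ 0))
  exact hsum ▸ hd₂fin.add hd₅fin

theorem exists_class_sub_nsmul_isBigO (h : MarkoffEntries ξ a b c) :
    ∃ (r : ℕ) (d w : UnitAddCircle), ¬IsOfFinAddOrder d ∧
      (fun n => ((a (r + 6 * n) * ξ ^ 6 : ℝ) : UnitAddCircle) - (n • d + w)) =O[atTop]
        fun n => (n : ℝ)⁻¹ := by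
  obtain ⟨r, d, hd, hdrift⟩ := h.exists_not_isOfFinAddOrder_drift
  obtain ⟨w, hw⟩ := exists_sub_isBigO_of_halving
    (g := fun n => ((a (r + 6 * n) * ξ ^ 6 : ℝ) : UnitAddCircle) - n • d)
    (h.eventually_norm_inv_class_succ_le r) (hdrift.congr_left fun n => by
      rw [succ_nsmul, sub_sub_sub_comm, add_sub_cancel_left, ← AddCircle.coe_sub]
      rfl)
  refine ⟨r, d, w, hd, ?_⟩
  have hn : (fun n : ℕ => (n : ℝ)) =O[atTop] fun n => (a (r + 6 * n) : ℝ) :=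
    (IsBigO.of_norm_le fun n => by
      rw [Real.norm_natCast]
      exact Nat.cast_le.2 (by omega : n ≤ r + 6 * n)).trans
      (h.natCast_isBigO.comp_tendsto (tendsto_add_six_mul r))
  exact (hw.congr_left fun n => sub_sub ..).trans (hn.inv_rev <|
    (eventually_ne_atTop 0).mono fun n hn hn0 => absurd (Nat.cast_eq_zero.1 hn0) hn)

theorem exists_frequently_norm_le (h : MarkoffEntries ξ a b c) :
    ∃ C : ℝ, 0 < C ∧
      ∃ᶠ k in atTop, ‖((a k * ξ ^ 6 : ℝ) : UnitAddCircle)‖ ≤ C / (k + 1 : ℕ) := by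
  obtain ⟨r, d, w, hd, hO⟩ := h.exists_class_sub_nsmul_isBigO
  obtain ⟨C, hC, hbound⟩ := hO.exists_pos
  refine ⟨(C + 5) * (r + 7), by positivity, (tendsto_add_six_mul r).frequently ?_⟩
  refine ((frequently_norm_nsmul_add_le hd w).and_eventually
    (hbound.bound.and (eventually_ge_atTop 1))).mono ?_
  rintro n ⟨hdw, hn, hn1⟩
  have hn1' : (1 : ℝ) ≤ n := mod_cast hn1
  rw [norm_inv, Real.norm_natCast] at hn
  calc _ ≤ C * (n : ℝ)⁻¹ + 5 / n :=
        (norm_le_norm_sub_add _ (n • d + w)).trans (add_le_add hn hdw)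
    _ = (C + 5) * (r + 7) / ((r + 7) * n) := by field_simp
    _ ≤ _ := by
        gcongr
        push_cast
        nlinarith [(Nat.cast_nonneg r : (0 : ℝ) ≤ r)]

end ResidueClasses

end MarkoffEntries

theorem det_Mmat (k : ℕ) : (Mmat k).det = 1 := by
  simp [Mmat, Matrix.det_fin_two, pow_succ, ← mul_pow]

theorem sq_eq_trace_smul_sub_det_smul {R : Type*} [CommRing R] (A : Matrix (Fin 2) (Fin 2) R) :
    A ^ 2 = A.trace • A - A.det • 1 := by
  nontriviality R
  have h := A.aeval_self_charpoly
  rw [A.charpoly_fin_two] at h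
  simp only [map_add, map_sub, map_mul, map_pow, aeval_X, aeval_C] at h
  rw [← sub_eq_zero, ← h, Algebra.algebraMap_eq_smul_one, Algebra.algebraMap_eq_smul_one,
    smul_mul_assoc, one_mul]
  abel

namespace MarkoffSeq

variable {ξ : ℝ} {x : ℕ → Matrix (Fin 2) (Fin 2) ℤ}

theorem symm (hx : MarkoffSeq ξ x) (k : ℕ) : x (k + 1) 1 0 = x (k + 1) 0 1 :=
  (hx.1 _ k.succ_pos).symm

theorem det (hx : MarkoffSeq ξ x) (k : ℕ) : (x (k + 1)).det = 1 :=
  hx.2.1 _ k.succ_pos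

theorem eq_mul_mul (hx : MarkoffSeq ξ x) (k : ℕ) :
    x (k + 3) = x (k + 2) * Mmat (k + 2) * x (k + 1) :=
  let ⟨_, _, _, _, _, _, h⟩ := hx.2.2
  (h _ k.succ_pos).2.2.1.1

theorem eq_mul_mul' (hx : MarkoffSeq ξ x) (k : ℕ) :
    x (k + 3) = x (k + 1) * Mmat (k + 1) * x (k + 2) :=
  let ⟨_, _, _, _, _, _, h⟩ := hx.2.2
  (h _ k.succ_pos).2.2.1.2

theorem adjugate_mul (hx : MarkoffSeq ξ x) (k : ℕ) :
    (x (k + 2)).adjugate * x (k + 3) = Mmat k * x (k + 1) := by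
  have hM : Mmat (k + 2) = Mmat k := by simp [Mmat, pow_succ]
  rw [hx.eq_mul_mul, hM, mul_assoc, ← mul_assoc, Matrix.adjugate_mul, hx.det (k + 1), one_smul,
    one_mul]

theorem wedge (hx : MarkoffSeq ξ x) (k : ℕ) :
    x (k + 2) 0 0 * x (k + 3) 0 1 - x (k + 2) 0 1 * x (k + 3) 0 0 = -((-1) ^ k * x (k + 1) 0 0) ∧
    x (k + 2) 0 0 * x (k + 3) 1 1 - x (k + 2) 1 1 * x (k + 3) 0 0 =
      -(3 * x (k + 1) 0 0 + 2 * (-1) ^ k * x (k + 1) 0 1) ∧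
    x (k + 2) 0 1 * x (k + 3) 1 1 - x (k + 2) 1 1 * x (k + 3) 0 1 =
      -(3 * x (k + 1) 0 1 + (-1) ^ k * x (k + 1) 1 1) := by
  have h (i j : Fin 2) := congrFun₂ (hx.adjugate_mul k) i j
  have h₀₀ := h 0 0
  have h₀₁ := h 0 1
  have h₁₀ := h 1 0
  have h₁₁ := h 1 1
  simp only [Matrix.adjugate_fin_two, hx.symm, Matrix.mul_apply, Matrix.of_apply, Matrix.cons_val',
    Matrix.cons_val_fin_one, Matrix.cons_val_zero, Fin.sum_univ_two, Matrix.cons_val_one, Mmat,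
    pow_succ] at h₀₀ h₀₁ h₁₀ h₁₁
  refine ⟨?_, ?_, ?_⟩
  · linear_combination h₁₀
  · linear_combination h₁₁ - h₀₀
  · linear_combination -h₀₁

theorem linear_recurrence (hx : MarkoffSeq ξ x) (k : ℕ) :
    x (k + 4) = (3 * x (k + 2) 0 0) • x (k + 3) - x (k + 1) := by
  set A := x (k + 2) * Mmat (k + 2) with hA
  have hdet : A.det = 1 := by rw [hA, Matrix.det_mul, hx.det (k + 1), det_Mmat, one_mul]
  have htrace : A.trace = 3 * x (k + 2) 0 0 := by
    simp only [hA, Mmat, pow_succ, Matrix.trace_fin_two, Matrix.mul_apply, Matrix.of_apply,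
      Matrix.cons_val', Matrix.cons_val_zero, Matrix.cons_val_fin_one, Fin.sum_univ_two,
      Matrix.cons_val_one, hx.symm (k + 1)]
    ring
  rw [hx.eq_mul_mul' (k + 1), hx.eq_mul_mul k, ← hA, ← mul_assoc, ← sq,
    sq_eq_trace_smul_sub_det_smul, hdet, htrace, sub_mul, smul_mul_assoc, one_smul, one_mul]

theorem natCast_le_Xnorm (hx : MarkoffSeq ξ x) (k : ℕ) : (k : ℝ) ≤ Xnorm x (k + 1) := by
  have hint (k : ℕ) : Xnorm x k = (max |x k 0 0| (max |x k 0 1| |x k 1 1|) : ℤ) := by simp [Xnorm]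
  obtain ⟨_, _, _, -, -, -, h⟩ := hx.2.2
  induction k with
  | zero => simp [Xnorm]
  | succ k ih =>
    have hlt := (h (k + 1) k.succ_pos).2.2.2.1
    rw [hint, hint] at hlt
    rw [hint] at ih ⊢
    norm_cast at hlt ih ⊢
    exact Int.add_one_le_iff.2 (ih.trans_lt hlt)

theorem Xnorm_isBigO (hx : MarkoffSeq ξ x) :
    (fun k => Xnorm x (k + 1)) =O[atTop] fun k => (x (k + 1) 0 0 : ℝ) := by
  obtain ⟨_, _, _, -, -, -, h⟩ := hx.2.2
  refine .of_bound (1 + ξ ^ 2) (.of_forall fun k => ?_)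
  rw [Real.norm_of_nonneg (by simp [Xnorm])]
  exact (h (k + 1) k.succ_pos).2.2.2.2.le

theorem entry_isBigO_Xnorm :
    (fun k => (x (k + 1) 0 0 : ℝ)) =O[atTop] fun k => Xnorm x (k + 1) :=
  .of_norm_le fun _ => le_max_left _ _

theorem inv_Xnorm_isBigO (hx : MarkoffSeq ξ x) :
    (fun k => (Xnorm x (k + 1))⁻¹) =O[atTop] fun k => (x (k + 1) 0 0 : ℝ)⁻¹ := by
  obtain ⟨_, _, _, -, -, -, h⟩ := hx.2.2
  refine entry_isBigO_Xnorm.inv_rev (.of_forall fun k hk => ?_)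
  have hlt := (h (k + 1) k.succ_pos).2.2.2.2
  rw [hk, abs_zero, mul_zero] at hlt
  exact absurd (by simp [Xnorm]) hlt.not_ge

theorem isSmall_of_le_div_Xnorm (hx : MarkoffSeq ξ x) {f : ℕ → ℝ} {C : ℝ}
    (hf : ∀ k, |f k| ≤ C / Xnorm x (k + 1)) : IsSmall (fun k => x (k + 1) 0 0) f := by
  refine .trans (.of_bound C (.of_forall fun k => (hf k).trans_eq ?_)) hx.inv_Xnorm_isBigO
  rw [div_eq_mul_inv, Real.norm_of_nonneg (by simp [Xnorm])]

theorem isSmall_approxErr (hx : MarkoffSeq ξ x) :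
    IsSmall (fun k => x (k + 1) 0 0)
      (approxErr ξ (fun k => x (k + 1) 0 0) fun k => x (k + 1) 0 1) :=
  let ⟨_, _, _, _, _, _, h⟩ := hx.2.2
  hx.isSmall_of_le_div_Xnorm fun k => (h (k + 1) k.succ_pos).2.1.1

theorem isSmall_approxErr_sq (hx : MarkoffSeq ξ x) :
    IsSmall (fun k => x (k + 1) 0 0)
      (approxErr (ξ ^ 2) (fun k => x (k + 1) 0 0) fun k => x (k + 1) 1 1) := by
  obtain ⟨_, _, _, -, -, -, h⟩ := hx.2.2
  have hsnd := hx.isSmall_of_le_div_Xnorm fun k => (h (k + 1) k.succ_pos).2.1.2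
  refine ((hx.isSmall_approxErr.const_mul_left ξ).add hsnd).congr_left fun k => ?_
  simp only [approxErr]
  ring

theorem entry_isBigO_succ (hx : MarkoffSeq ξ x) :
    (fun k => (x (k + 1) 0 0 : ℝ)) =O[atTop] fun k => (x (k + 2) 0 0 : ℝ) := by
  obtain ⟨_, _, _, -, -, -, h⟩ := hx.2.2
  have hXnorm : (fun k => Xnorm x (k + 1)) =O[atTop] fun k => Xnorm x (k + 2) :=
    .of_norm_le fun k => by
      rw [Real.norm_of_nonneg (by simp [Xnorm])]
      exact (h (k + 1) k.succ_pos).2.2.2.1.le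
  exact entry_isBigO_Xnorm.trans <|
    hXnorm.trans (hx.Xnorm_isBigO.comp_tendsto (tendsto_add_atTop_nat 1))

theorem entries (hx : MarkoffSeq ξ x) :
    MarkoffEntries ξ (fun k => x (k + 1) 0 0) (fun k => x (k + 1) 0 1)
      fun k => x (k + 1) 1 1 where
  det k := by
    have hdet := hx.det k
    rw [Matrix.det_fin_two, hx.symm, ← sq] at hdet
    exact_mod_cast hdet
  recur₀ k := mod_cast congrFun₂ (hx.linear_recurrence k) 0 0
  recur₁ k := mod_cast congrFun₂ (hx.linear_recurrence k) 0 1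
  recur₂ k := mod_cast congrFun₂ (hx.linear_recurrence k) 1 1
  wedge₀₁ k := mod_cast (hx.wedge k).1
  wedge₀₂ k := mod_cast (hx.wedge k).2.1
  wedge₁₂ k := mod_cast (hx.wedge k).2.2
  small₁ := hx.isSmall_approxErr
  small₂ := hx.isSmall_approxErr_sq
  isBigO_succ := hx.entry_isBigO_succ
  natCast_isBigO := .trans (.of_norm_le fun k => by simpa using hx.natCast_le_Xnorm k)
    hx.Xnorm_isBigO

end MarkoffSeq

theorem stmt18 (ξ : ℝ) (x : ℕ → Matrix (Fin 2) (Fin 2) ℤ) (hx : MarkoffSeq ξ x) :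
    ∃ c : ℝ, 0 < c ∧
      {k : ℕ | 1 ≤ k ∧ distInt ((x k 0 0 : ℝ) * ξ^6) ≤ c / (k : ℝ)}.Infinite := by
  obtain ⟨c, hc, hfreq⟩ := hx.entries.exists_frequently_norm_le
  refine ⟨c, hc, Nat.frequently_atTop_iff_infinite.1 ?_⟩
  refine (tendsto_add_atTop_nat 1).frequently (hfreq.mono fun k hk => ⟨k.succ_pos, ?_⟩)
  rwa [UnitAddCircle.norm_eq] at hk
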